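/- For every constant C > 0 there exist a constant C' > 0 and a time t₀ ≥ 1 such that the following holds. For all t ≥ t₀, all T with 0 < T ≤ 1, all x ≥ 0 and all ξ = (ξ₁,ξ₂,ξ₃) ∈ ℝ³ with x − T(ξ₁+u) ≥ 0, ∫_{t−T}^{t} e^{−ν(ξ)(t−s)/2} · ( ∫_{ℝ³} e^{−C|ξ−ξ'|²}/|ξ−ξ'| · α(x−(t−s)(ξ₁+u), ξ')⁻¹ dξ' ) ds ≤ C' · (√T + T·ln t) / α(x,ξ). -/

import Mathlib

open MeasureTheory

noncomputable section

/-- The kinetic weight `α̃(x,ξ) = √((ξ₁+u)² + (cν₀)² x²)`. -/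
def alphaTilde (u c ν₀ : ℝ) (x : ℝ) (ξ : EuclideanSpace ℝ (Fin 3)) : ℝ :=
  Real.sqrt ((ξ 0 + u) ^ 2 + (c * ν₀) ^ 2 * x ^ 2)

/-- Cut-off inverse square root singularity. -/
def nlnH (p : ℝ) : ℝ := Set.indicator (Set.Icc (-1) 1) (fun p => (Real.sqrt |p|)⁻¹) p

/-- One-dimensional majorant. -/
def nlnh (C a b p : ℝ) : ℝ := Real.exp (-C * (a - p) ^ 2) + nlnH (p - b)

lemma nlnH_nonneg (p : ℝ) : 0 ≤ nlnH p := by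
  unfold nlnH
  exact Set.indicator_nonneg (fun _ _ => by positivity) _

lemma nln_sqrt_inv {x : ℝ} (hx : 0 ≤ x) : (Real.sqrt x)⁻¹ = x ^ (-(1/2) : ℝ) := by
  rw [Real.sqrt_eq_rpow, Real.rpow_neg hx]

lemma nln_ii (b : ℝ) (hb : 0 ≤ b) :
    IntervalIntegrable (fun s : ℝ => (Real.sqrt s)⁻¹) volume 0 b ∧
    ∫ s in (0:ℝ)..b, (Real.sqrt s)⁻¹ = 2 * Real.sqrt b := by
  have h1 : IntervalIntegrable (fun s : ℝ => s ^ (-(1/2) : ℝ)) volume 0 b :=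
    intervalIntegral.intervalIntegrable_rpow' (by norm_num)
  constructor
  · refine h1.congr ?_
    intro x hx
    rw [Set.uIoc_of_le hb] at hx
    exact (nln_sqrt_inv hx.1.le).symm
  · have : ∫ s in (0:ℝ)..b, (Real.sqrt s)⁻¹ = ∫ s in (0:ℝ)..b, s ^ (-(1/2) : ℝ) := by
      apply intervalIntegral.integral_congr
      intro x hx
      rw [Set.uIcc_of_le hb] at hx
      exact nln_sqrt_inv hx.1
    rw [this, integral_rpow (Or.inl (by norm_num)), Real.sqrt_eq_rpow]
    norm_num
    ring

lemma nlnH_integrable : Integrable nlnH := by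
  unfold nlnH
  rw [show (fun p => Set.indicator (Set.Icc (-1:ℝ) 1) (fun p => (Real.sqrt |p|)⁻¹) p)
    = Set.indicator (Set.Icc (-1:ℝ) 1) (fun p => (Real.sqrt |p|)⁻¹) from rfl,
    integrable_indicator_iff measurableSet_Icc]
  have h1 : IntervalIntegrable (fun s : ℝ => (Real.sqrt |s|)⁻¹) volume 0 1 := by
    refine (nln_ii 1 zero_le_one).1.congr ?_
    intro x hx
    rw [Set.uIoc_of_le zero_le_one] at hx
    simp only [abs_of_pos hx.1]
  have h2 : IntervalIntegrable (fun s : ℝ => (Real.sqrt |s|)⁻¹) volume (-1) 0 := by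
    have := (h1.comp_sub_left 0)
    simp at this
    exact this.symm
  have := h2.trans h1
  rwa [intervalIntegrable_iff_integrableOn_Icc_of_le (by norm_num)] at this

lemma nln_right (a b : ℝ) (hab : a ≤ b) :
    IntegrableOn (fun s : ℝ => (Real.sqrt (s - a))⁻¹) (Set.Icc a b) ∧
    ∫ s in Set.Icc a b, (Real.sqrt (s - a))⁻¹ = 2 * Real.sqrt (b - a) := by
  obtain ⟨h1, h2⟩ := nln_ii (b - a) (by linarith)
  constructor
  · rw [← intervalIntegrable_iff_integrableOn_Icc_of_le hab]
    have := h1.comp_sub_right a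
    simpa using this
  · rw [integral_Icc_eq_integral_Ioc, ← intervalIntegral.integral_of_le hab, ← h2,
      intervalIntegral.integral_comp_sub_right (fun s => (Real.sqrt s)⁻¹) a]
    simp

lemma nln_left (a b : ℝ) (hab : a ≤ b) :
    IntegrableOn (fun s : ℝ => (Real.sqrt (b - s))⁻¹) (Set.Icc a b) ∧
    ∫ s in Set.Icc a b, (Real.sqrt (b - s))⁻¹ = 2 * Real.sqrt (b - a) := by
  obtain ⟨h1, h2⟩ := nln_ii (b - a) (by linarith)
  constructor
  · rw [← intervalIntegrable_iff_integrableOn_Icc_of_le hab]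
    have := (h1.comp_sub_left b).symm
    simpa using this
  · rw [integral_Icc_eq_integral_Ioc, ← intervalIntegral.integral_of_le hab, ← h2,
      intervalIntegral.integral_comp_sub_left (fun s => (Real.sqrt s)⁻¹) b]
    simp

/-- the constant -/
def nlnK (C : ℝ) : ℝ := (∫ p : ℝ, Real.exp (-C * p ^ 2)) + ∫ p, nlnH p

lemma nlnh_integrable {C : ℝ} (hC : 0 < C) (a b : ℝ) : Integrable (nlnh C a b) := by
  unfold nlnh
  exact ((integrable_exp_neg_mul_sq hC).comp_sub_left a).add (nlnH_integrable.comp_sub_right b)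

lemma nlnh_integral {C : ℝ} (hC : 0 < C) (a b : ℝ) : ∫ p, nlnh C a b p = nlnK C := by
  unfold nlnh nlnK
  rw [integral_add ((integrable_exp_neg_mul_sq hC).comp_sub_left a)
    (nlnH_integrable.comp_sub_right b),
    integral_sub_left_eq_self (fun p : ℝ => Real.exp (-C * p ^ 2)) volume a,
    integral_sub_right_eq_self nlnH b]

lemma nlnh_exp_le (C a b p : ℝ) : Real.exp (-C * (a - p) ^ 2) ≤ nlnh C a b p := by
  unfold nlnh; linarith [nlnH_nonneg (p - b)]

lemma nlnh_exp_sqrt_le {C : ℝ} (hC : 0 < C) (a b p : ℝ) :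
    Real.exp (-C * (a - p) ^ 2) * (Real.sqrt |p - b|)⁻¹ ≤ nlnh C a b p := by
  have he : Real.exp (-C * (a - p) ^ 2) ≤ 1 := Real.exp_le_one_iff.2 (by nlinarith [sq_nonneg (a-p)])
  have he0 := Real.exp_pos (-C * (a - p) ^ 2)
  have hs : 0 ≤ (Real.sqrt |p - b|)⁻¹ := by positivity
  unfold nlnh
  by_cases h : |p - b| ≤ 1
  · have : nlnH (p - b) = (Real.sqrt |p - b|)⁻¹ := by
      unfold nlnH
      rw [Set.indicator_of_mem]
      exact abs_le.1 h
    rw [this]; nlinarith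
  · push Not at h
    have h1 : (Real.sqrt |p - b|)⁻¹ ≤ 1 := by
      apply inv_le_one_of_one_le₀
      exact Real.one_le_sqrt.2 h.le
    nlinarith [nlnH_nonneg (p - b)]

lemma nln_prod_integrable {C : ℝ} (hC : 0 < C) (a b : Fin 3 → ℝ) :
    Integrable (fun ξ : EuclideanSpace ℝ (Fin 3) => ∏ i, nlnh C (a i) (b i) (ξ i)) ∧
    ∫ ξ : EuclideanSpace ℝ (Fin 3), ∏ i, nlnh C (a i) (b i) (ξ i) = nlnK C ^ 3 := by
  constructor
  · rw [← (PiLp.volume_preserving_toLp (Fin 3)).integrable_comp_emb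
      (MeasurableEquiv.toLp 2 _).measurableEmbedding]
    exact Integrable.fintype_prod (f := fun i => nlnh C (a i) (b i))
      (fun i => nlnh_integrable hC (a i) (b i))
  · rw [← (PiLp.volume_preserving_toLp (Fin 3)).integral_comp
      (MeasurableEquiv.toLp 2 _).measurableEmbedding]
    simp only
    rw [integral_fintype_prod_volume_eq_prod (fun i => nlnh C (a i) (b i))]
    simp [nlnh_integral hC]

lemma nln_ae_ne (i : Fin 3) (a : ℝ) : ∀ᵐ ξ : EuclideanSpace ℝ (Fin 3), ξ i ≠ a :=
  (PiLp.volume_preserving_ofLp (Fin 3)).quasiMeasurePreserving.ae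
    (Measure.ae_eval_ne (μ := fun _ : Fin 3 => (volume : Measure ℝ)) i a)

lemma nln_kernel_le {C : ℝ} (hC : 0 < C) (v : EuclideanSpace ℝ (Fin 3))
    (h1 : v 1 ≠ 0) (h2 : v 2 ≠ 0) :
    Real.exp (-C * ‖v‖ ^ 2) / ‖v‖ ≤ Real.exp (-C * (v 0) ^ 2) *
      (Real.exp (-C * (v 1) ^ 2) * (Real.sqrt |v 1|)⁻¹) *
      (Real.exp (-C * (v 2) ^ 2) * (Real.sqrt |v 2|)⁻¹) := by
  have hn : ‖v‖ ^ 2 = v 0 ^ 2 + v 1 ^ 2 + v 2 ^ 2 := by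
    rw [EuclideanSpace.real_norm_sq_eq, Fin.sum_univ_three]
  have hb : Real.sqrt |v 1| * Real.sqrt |v 2| ≤ ‖v‖ := by
    rw [← Real.sqrt_mul (abs_nonneg _)]
    apply Real.sqrt_le_iff.2 ⟨norm_nonneg _, ?_⟩
    rw [hn, ← sq_abs (v 1), ← sq_abs (v 2)]
    nlinarith [sq_nonneg (|v 1| - |v 2|), sq_nonneg (v 0), sq_nonneg (|v 1| + |v 2|)]
  have hp : 0 < Real.sqrt |v 1| * Real.sqrt |v 2| := by positivity
  have : Real.exp (-C * ‖v‖ ^ 2) = Real.exp (-C * (v 0) ^ 2) * Real.exp (-C * (v 1) ^ 2) *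
      Real.exp (-C * (v 2) ^ 2) := by
    rw [hn, ← Real.exp_add, ← Real.exp_add]; congr 1; ring
  rw [div_eq_mul_inv, this]
  calc _ ≤ Real.exp (-C * (v 0) ^ 2) * Real.exp (-C * (v 1) ^ 2) *
      Real.exp (-C * (v 2) ^ 2) * (Real.sqrt |v 1| * Real.sqrt |v 2|)⁻¹ := by
        gcongr
    _ = _ := by rw [mul_inv]; ring

section chi
variable {χ χ' : ℝ → ℝ}

lemma nln_chi_mono (hderiv : ∀ s ≥ (0:ℝ), HasDerivAt χ (χ' s) s)
    (hmono : ∀ s ≥ (0:ℝ), 0 ≤ χ' s) : MonotoneOn χ (Set.Ici 0) := by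
  apply monotoneOn_of_deriv_nonneg (convex_Ici 0)
  · exact fun s hs => (hderiv s hs).continuousAt.continuousWithinAt
  · intro s hs
    rw [interior_Ici] at hs
    exact (hderiv s (le_of_lt hs)).differentiableAt.differentiableWithinAt
  · intro s hs
    rw [interior_Ici] at hs
    rw [(hderiv s (le_of_lt hs)).deriv]
    exact hmono s (le_of_lt hs)

lemma nln_chi_facts (hm : MonotoneOn χ (Set.Ici 0))
    (hid : ∀ s : ℝ, 0 ≤ s → s ≤ 1/2 → χ s = s)
    (hone : ∀ s : ℝ, 2 ≤ s → χ s = 1) :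
    (∀ s, 0 ≤ s → 0 ≤ χ s) ∧ (∀ s, 0 < s → 0 < χ s ∧ (χ s)⁻¹ ≤ 2 + s⁻¹) ∧
      (∀ s, 0 ≤ s → χ s ≤ 1 ∧ χ s ≤ 2 * s) := by
  have key : ∀ s, 1/2 ≤ s → 1/2 ≤ χ s := by
    intro s hs
    have := hm (show (1/2:ℝ) ∈ Set.Ici 0 by simp) (show s ∈ Set.Ici 0 by simp; linarith) hs
    rwa [hid (1/2) (by norm_num) le_rfl] at this
  have pos : ∀ s, 0 < s → 0 < χ s := by
    intro s hs
    rcases le_total s (1/2) with h | h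
    · rwa [hid s hs.le h]
    · linarith [key s h]
  have le1 : ∀ s, 0 ≤ s → χ s ≤ 1 := by
    intro s hs
    have := hm (show s ∈ Set.Ici 0 from hs) (show max s 2 ∈ Set.Ici 0 by simp) (le_max_left s 2)
    rwa [hone _ (le_max_right s 2)] at this
  refine ⟨?_, ?_, ?_⟩
  · intro s hs
    rcases hs.eq_or_lt with h | h
    · rw [← h, hid 0 le_rfl (by norm_num)]
    · exact (pos s h).le
  · intro s hs
    refine ⟨pos s hs, ?_⟩
    rcases le_total s (1/2) with h | h
    · rw [hid s hs.le h]; linarith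
    · have : (χ s)⁻¹ ≤ (1/2)⁻¹ := inv_anti₀ (by norm_num) (key s h)
      have h3 : 0 < s⁻¹ := by positivity
      norm_num at this
      linarith
  · intro s hs
    refine ⟨le1 s hs, ?_⟩
    rcases le_total s (1/2) with h | h
    · rw [hid s hs h]; linarith
    · linarith [le1 s hs]
end chi

lemma nln_inner_le {C ν₀ u : ℝ} (hC : 0 < C) (hν₀ : 0 < ν₀) {χ : ℝ → ℝ}
    (h0 : ∀ s, 0 ≤ s → 0 ≤ χ s) (hinv : ∀ s, 0 < s → 0 < χ s ∧ (χ s)⁻¹ ≤ 2 + s⁻¹)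
    (y : ℝ) (hy : 0 < y) (ξ : EuclideanSpace ℝ (Fin 3)) :
    ∫ ξ' : EuclideanSpace ℝ (Fin 3), Real.exp (-C * ‖ξ - ξ'‖ ^ 2) / ‖ξ - ξ'‖ *
                (χ (alphaTilde u (1/8) ν₀ y ξ'))⁻¹ ≤
      nlnK C ^ 3 * (2 + (Real.sqrt (ν₀ / 8 * y))⁻¹) := by
  set Q := (Real.sqrt (ν₀ / 8 * y))⁻¹ with hQ
  have hQ0 : 0 ≤ Q := by positivity
  let b : Fin 3 → ℝ := ![-u, ξ 1, ξ 2]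
  obtain ⟨hi, hv⟩ := nln_prod_integrable hC (fun i => ξ i) b
  rw [← hv, ← integral_mul_const]
  apply integral_mono_of_nonneg
  · refine Filter.Eventually.of_forall fun ξ' => ?_
    have := h0 (alphaTilde u (1/8) ν₀ y ξ') (Real.sqrt_nonneg _)
    simp only [Pi.zero_apply]
    positivity
  · exact hi.mul_const _
  · filter_upwards [nln_ae_ne 0 (-u), nln_ae_ne 1 (ξ 1), nln_ae_ne 2 (ξ 2)] with ξ' n0 n1 n2
    have hk := nln_kernel_le hC (ξ - ξ') (by simpa [sub_eq_zero] using n1.symm)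
      (by simpa [sub_eq_zero] using n2.symm)
    simp only [PiLp.sub_apply] at hk
    rw [abs_sub_comm (ξ 1), abs_sub_comm (ξ 2)] at hk
    have e1 := nlnh_exp_sqrt_le hC (ξ 1) (ξ 1) (ξ' 1)
    have e2 := nlnh_exp_sqrt_le hC (ξ 2) (ξ 2) (ξ' 2)
    have e0 := nlnh_exp_sqrt_le hC (ξ 0) (-u) (ξ' 0)
    have e0' := nlnh_exp_le C (ξ 0) (-u) (ξ' 0)
    have hp : 0 < |ξ' 0 - -u| := abs_pos.2 (sub_ne_zero.2 n0)
    have hq : 0 < ν₀ / 8 * y := by positivity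
    have hα : Real.sqrt |ξ' 0 - -u| * Real.sqrt (ν₀ / 8 * y) ≤ alphaTilde u (1/8) ν₀ y ξ' := by
      unfold alphaTilde
      rw [← Real.sqrt_mul hp.le]
      apply Real.sqrt_le_sqrt
      have : (ξ' 0 + u) ^ 2 = |ξ' 0 - -u| ^ 2 := by rw [sq_abs]; ring
      rw [this]
      nlinarith [sq_nonneg (|ξ' 0 - -u| - ν₀ / 8 * y), mul_pos hp hq]
    have hs : 0 < Real.sqrt |ξ' 0 - -u| * Real.sqrt (ν₀ / 8 * y) := by positivity
    have hχ : (χ (alphaTilde u (1/8) ν₀ y ξ'))⁻¹ ≤ 2 + (Real.sqrt |ξ' 0 - -u|)⁻¹ * Q := by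
      refine (hinv _ (hs.trans_le hα)).2.trans ?_
      have := inv_anti₀ hs hα
      rw [mul_inv] at this
      linarith
    have hχ0 : 0 ≤ (χ (alphaTilde u (1/8) ν₀ y ξ'))⁻¹ :=
      inv_nonneg.2 (h0 _ (Real.sqrt_nonneg _))
    have A0 : Real.exp (-C * (ξ 0 - ξ' 0) ^ 2) * (2 + (Real.sqrt |ξ' 0 - -u|)⁻¹ * Q) ≤
        nlnh C (ξ 0) (-u) (ξ' 0) * (2 + Q) := by
      nlinarith [mul_le_mul_of_nonneg_right e0 hQ0]
    have z1 : 0 ≤ nlnh C (ξ 1) (ξ 1) (ξ' 1) := (by positivity : (0:ℝ) ≤ _).trans e1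
    have z0 : 0 ≤ nlnh C (ξ 0) (-u) (ξ' 0) := (by positivity : (0:ℝ) ≤ _).trans e0
    have hpr : ∏ i, nlnh C (ξ i) (b i) (ξ' i) = nlnh C (ξ 0) (-u) (ξ' 0) *
        nlnh C (ξ 1) (ξ 1) (ξ' 1) * nlnh C (ξ 2) (ξ 2) (ξ' 2) := by
      rw [Fin.prod_univ_three]; rfl
    simp only [hpr]
    calc _ ≤ (Real.exp (-C * (ξ 0 - ξ' 0) ^ 2) *
          (Real.exp (-C * (ξ 1 - ξ' 1) ^ 2) * (Real.sqrt |ξ' 1 - ξ 1|)⁻¹) *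
          (Real.exp (-C * (ξ 2 - ξ' 2) ^ 2) * (Real.sqrt |ξ' 2 - ξ 2|)⁻¹)) *
          (2 + (Real.sqrt |ξ' 0 - -u|)⁻¹ * Q) := by
            apply mul_le_mul hk hχ hχ0; positivity
      _ = (Real.exp (-C * (ξ 0 - ξ' 0) ^ 2) * (2 + (Real.sqrt |ξ' 0 - -u|)⁻¹ * Q)) *
          (Real.exp (-C * (ξ 1 - ξ' 1) ^ 2) * (Real.sqrt |ξ' 1 - ξ 1|)⁻¹) *
          (Real.exp (-C * (ξ 2 - ξ' 2) ^ 2) * (Real.sqrt |ξ' 2 - ξ 2|)⁻¹) := by ring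
      _ ≤ (nlnh C (ξ 0) (-u) (ξ' 0) * (2 + Q)) * nlnh C (ξ 1) (ξ 1) (ξ' 1) *
          nlnh C (ξ 2) (ξ 2) (ξ' 2) := by
            gcongr
      _ = _ := by ring

lemma nln_not_integrable {C ν₀ u : ℝ} {χ : ℝ → ℝ} (hC : 0 < C)
    (hid : ∀ s : ℝ, 0 ≤ s → s ≤ 1/2 → χ s = s)
    (ξ : EuclideanSpace ℝ (Fin 3)) (hξ : ξ 0 + u = 0) :
    ¬ Integrable (fun ξ' : EuclideanSpace ℝ (Fin 3) =>
      Real.exp (-C * ‖ξ - ξ'‖ ^ 2) / ‖ξ - ξ'‖ *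
                (χ (alphaTilde u (1/8) ν₀ 0 ξ'))⁻¹) := by
  intro h
  have h := h.comp_add_left ξ
  rw [← (PiLp.volume_preserving_toLp (Fin 3)).integrable_comp_emb
      (MeasurableEquiv.toLp 2 _).measurableEmbedding,
    ← ((volume_preserving_piFinSuccAbove (fun _ : Fin 3 => ℝ) 0).symm).integrable_comp_emb
      (MeasurableEquiv.measurableEmbedding _)] at h
  obtain ⟨z, hz⟩ := (Integrable.prod_left_ae h).exists
  have hz2 : IntervalIntegrable (fun x : ℝ => x⁻¹) volume 0 (1/2) := by
    rw [intervalIntegrable_iff_integrableOn_Ioc_of_le (by norm_num)]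
    set A := (1/2:ℝ)^2 + z 0 ^ 2 + z 1 ^ 2 with hA
    have hA0 : 0 < A := by positivity
    have hc : 0 < Real.exp (-C * A) / Real.sqrt A := by positivity
    refine Integrable.mono' ((hz.integrableOn (s := Set.Ioc 0 (1/2))).const_mul
      (Real.exp (-C * A) / Real.sqrt A)⁻¹) (by fun_prop) ?_
    refine (ae_restrict_iff' measurableSet_Ioc).2 (Filter.Eventually.of_forall fun x hx => ?_)
    have hvi : ∀ r : ℝ, ((MeasurableEquiv.piFinSuccAbove (fun _ : Fin 3 => ℝ) 0).symm (r, z))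
       = ![r, z 0, z 1] := by
      intro r
      ext i
      fin_cases i <;> rfl
    simp only [Function.comp, hvi]
    set v : EuclideanSpace ℝ (Fin 3) := WithLp.toLp 2 ![x, z 0, z 1] with hv
    have hn : ‖v‖ ^ 2 = x ^ 2 + z 0 ^ 2 + z 1 ^ 2 := by
      rw [EuclideanSpace.real_norm_sq_eq, Fin.sum_univ_three]; rfl
    have hx0 : 0 < x := hx.1
    have hle : ‖v‖ ^ 2 ≤ A := by
      rw [hn, hA]; nlinarith [hx.2]
    have hvp : 0 < ‖v‖ := by
      have : 0 < ‖v‖ ^ 2 := by rw [hn]; positivity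
      rcases (norm_nonneg v).eq_or_lt with h' | h'
      · rw [← h'] at this; norm_num at this
      · exact h'
    have hle2 : ‖v‖ ≤ Real.sqrt A := Real.le_sqrt_of_sq_le hle
    have ha : alphaTilde u (1/8) ν₀ 0 (ξ + v) = x := by
      unfold alphaTilde
      have : (ξ + v) 0 + u = x := by
        have : v 0 = x := rfl
        rw [PiLp.add_apply, this]; linarith
      rw [this]; simp [Real.sqrt_sq hx0.le]
    rw [ha, hid x hx0.le hx.2, sub_add_cancel_left, norm_neg, Real.norm_of_nonneg (by positivity)]
    rw [← mul_assoc]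
    apply le_mul_of_one_le_left (by positivity)
    rw [inv_mul_eq_div, one_le_div hc]
    apply div_le_div₀ (by positivity) _ hvp hle2
    apply Real.exp_le_exp.2
    nlinarith
  rw [intervalIntegrable_inv_iff] at hz2
  norm_num at hz2

lemma nln_y_lower {x w T τ : ℝ} (hx : 0 ≤ x) (hT : 0 < T) (hT1 : T ≤ 1)
    (hxT : 0 ≤ x - T * w) (h0 : 0 ≤ τ) (h1 : τ ≤ T) :
    (if w ≤ 0 then τ else T - τ) * (x + |w|) / 2 ≤ x - τ * w := by
  split_ifs with hw
  · rw [abs_of_nonpos hw]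
    nlinarith [mul_nonneg hx (sub_nonneg.2 (h1.trans hT1)), mul_nonneg h0 hx,
      mul_nonneg h0 (neg_nonneg.2 hw)]
  · push Not at hw
    rw [abs_of_pos hw]
    have a1 : (T - τ) * w ≤ x - τ * w := by linarith
    have a2 : (T - τ) * x ≤ x - τ * w := by
      have : T * ((T - τ) * x) ≤ T * (x - τ * w) := by
        nlinarith [mul_nonneg h0 hxT, mul_nonneg (mul_nonneg (sub_nonneg.2 hT1)
          (sub_nonneg.2 h1)) hx, mul_nonneg (sub_nonneg.2 h1) hx]
      exact le_of_mul_le_mul_left this hT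
    linarith

lemma nln_time_bound {κ a S θ y : ℝ} (hκ : 0 < κ) (ha : 0 < a) (ha1 : a ≤ 1)
    (haS : a ≤ 2 * (1 + κ) * S) (hθ : 0 < θ) (hS : 0 < S) (hy : θ * S / 2 ≤ y) :
    2 + (Real.sqrt (κ * y))⁻¹ ≤
      (2 + 2 * Real.sqrt (1 + κ) / Real.sqrt κ * (Real.sqrt θ)⁻¹) / a := by
  have hy0 : 0 < y := lt_of_lt_of_le (by positivity) hy
  rw [le_div_iff₀ ha, add_mul]
  have h1 : a ≤ Real.sqrt (2 * (1 + κ) * S) := Real.le_sqrt_of_sq_le (by nlinarith)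
  have h2 : (Real.sqrt (κ * y))⁻¹ ≤ (Real.sqrt (κ * (θ * S / 2)))⁻¹ := by
    apply inv_anti₀ (by positivity)
    apply Real.sqrt_le_sqrt
    gcongr
  have h3 : (Real.sqrt (κ * (θ * S / 2)))⁻¹ * Real.sqrt (2 * (1 + κ) * S) =
      2 * Real.sqrt (1 + κ) / Real.sqrt κ * (Real.sqrt θ)⁻¹ := by
    have : 2 * (1 + κ) * S = (κ * (θ * S / 2)) * (2 ^ 2 * (1 + κ) / (κ * θ)) := by
      field_simp
    rw [this, Real.sqrt_mul (show 0 ≤ κ * (θ * S / 2) by positivity), ← mul_assoc, inv_mul_cancel₀ (by positivity), one_mul,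
      Real.sqrt_div (by positivity), Real.sqrt_mul (by positivity), Real.sqrt_mul hκ.le,
      Real.sqrt_sq (by norm_num)]
    field_simp
  have h4 := mul_le_mul h2 h1 ha.le (by positivity)
  rw [h3] at h4
  linarith

/-- small-time part of Lemma NLN, with `c = 1/8`:
for every `C > 0` there are `C' > 0` and `t₀ ≥ 1` such that for all `t ≥ t₀`,
`0 < T ≤ 1`, `x ≥ 0` and `ξ` with `x − T(ξ₁+u) ≥ 0`,
`∫_{t−T}^t e^{−ν(ξ)(t−s)/2} ∫ e^{−C|ξ−ξ'|²}/|ξ−ξ'| · α(x−(t−s)(ξ₁+u),ξ')⁻¹ dξ' ds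
  ≤ C'(√T + T ln t) / α(x,ξ)`. -/
theorem nln_small_time (ν₀ u : ℝ) (hν₀ : 0 < ν₀) (hu : |u| ≤ 1/2)
    (χ χ' : ℝ → ℝ)
    (hderiv : ∀ s ≥ (0:ℝ), HasDerivAt χ (χ' s) s)
    (hcont : ContinuousOn χ' (Set.Ici (0:ℝ)))
    (hmono : ∀ s ≥ (0:ℝ), 0 ≤ χ' s)
    (hid : ∀ s : ℝ, 0 ≤ s → s ≤ 1/2 → χ s = s)
    (hone : ∀ s : ℝ, 2 ≤ s → χ s = 1)
    (hbound : ∀ s ≥ (0:ℝ), |χ' s| ≤ 1)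
    (ν : EuclideanSpace ℝ (Fin 3) → ℝ) (hνmeas : Measurable ν)
    (hνlb : ∀ ξ, ν₀ * (1 + ‖ξ‖) ≤ ν ξ) :
    ∀ C > (0:ℝ), ∃ C' > (0:ℝ), ∃ t₀ ≥ (1:ℝ), ∀ t ≥ t₀, ∀ T : ℝ, 0 < T → T ≤ 1 →
      ∀ x ≥ (0:ℝ), ∀ ξ : EuclideanSpace ℝ (Fin 3), 0 ≤ x - T * (ξ 0 + u) →
        (∫ s in Set.Icc (t - T) t, Real.exp (-ν ξ * (t - s) / 2) *
            ∫ ξ' : EuclideanSpace ℝ (Fin 3),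
              Real.exp (-C * ‖ξ - ξ'‖ ^ 2) / ‖ξ - ξ'‖ *
                (χ (alphaTilde u (1/8) ν₀ (x - (t - s) * (ξ 0 + u)) ξ'))⁻¹) ≤
          C' * (Real.sqrt T + T * Real.log t) / χ (alphaTilde u (1/8) ν₀ x ξ) := by
  intro C hC
  obtain ⟨hχ0, hχinv, hχle⟩ := nln_chi_facts (nln_chi_mono hderiv hmono) hid hone
  set κ := ν₀ / 8 with hκdef
  have hκ : 0 < κ := by positivity
  set M := 2 * Real.sqrt (1 + κ) / Real.sqrt κ with hM
  have hM0 : 0 ≤ M := by positivity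
  have hK : 0 ≤ nlnK C :=
    add_nonneg (integral_nonneg fun _ => (Real.exp_pos _).le) (integral_nonneg nlnH_nonneg)
  refine ⟨nlnK C ^ 3 * (2 + 2 * M) + 1, by positivity, 1, le_rfl, ?_⟩
  intro t ht T hT hT1 x hx ξ hxT
  have hlog : 0 ≤ Real.log t := Real.log_nonneg ht
  set w := ξ 0 + u with hw
  set a := χ (alphaTilde u (1/8) ν₀ x ξ) with ha
  have hin0 : ∀ y : ℝ, 0 ≤ ∫ ξ' : EuclideanSpace ℝ (Fin 3),
      Real.exp (-C * ‖ξ - ξ'‖ ^ 2) / ‖ξ - ξ'‖ * (χ (alphaTilde u (1/8) ν₀ y ξ'))⁻¹ := by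
    intro y
    refine integral_nonneg fun ξ' => ?_
    have := hχ0 (alphaTilde u (1/8) ν₀ y ξ') (Real.sqrt_nonneg _)
    simp only [Pi.zero_apply]
    positivity
  by_cases hdeg : x = 0 ∧ w = 0
  · obtain ⟨h1, h2⟩ := hdeg
    have : ∀ s : ℝ, x - (t - s) * w = 0 := by intro s; rw [h1, h2]; simp
    simp only [this]
    rw [integral_undef (nln_not_integrable hC hid ξ h2)]
    simp only [mul_zero, integral_zero]
    have ha0 : 0 ≤ a := hχ0 _ (Real.sqrt_nonneg _)
    positivity
  have hS : 0 < x + |w| := by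
    by_contra hcon
    push Not at hcon
    have := abs_nonneg w
    exact hdeg ⟨by linarith, abs_eq_zero.1 (by linarith)⟩
  have hαpos : 0 < alphaTilde u (1/8) ν₀ x ξ := by
    unfold alphaTilde
    rw [← hw]
    apply Real.sqrt_pos.2
    by_cases hw0 : w = 0
    · have hx0 : x ≠ 0 := fun h => hdeg ⟨h, hw0⟩
      positivity
    · positivity
  have hαle : alphaTilde u (1/8) ν₀ x ξ ≤ (1 + κ) * (x + |w|) := by
    unfold alphaTilde
    rw [← hw]
    apply Real.sqrt_le_iff.2 ⟨by positivity, ?_⟩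
    have e1 : w ^ 2 + (1/8 * ν₀) ^ 2 * x ^ 2 ≤ (|w| + κ * x) ^ 2 := by
      rw [← sq_abs w, hκdef]
      have : 0 ≤ |w| * (ν₀ * x) := by positivity
      nlinarith
    refine e1.trans ?_
    have : 0 ≤ κ * |w| := by positivity
    apply pow_le_pow_left₀ (by positivity)
    nlinarith
  have hapos : 0 < a := (hχinv _ hαpos).1
  have ha1 : a ≤ 1 := (hχle _ hαpos.le).1
  have haS : a ≤ 2 * (1 + κ) * (x + |w|) := by
    have := (hχle _ hαpos.le).2
    linarith
  have hν : 0 ≤ ν ξ := le_trans (by positivity) (hνlb ξ)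
  -- the time weight
  let θ : ℝ → ℝ := fun s => if w ≤ 0 then t - s else s - (t - T)
  have hθint : IntegrableOn (fun s => (Real.sqrt (θ s))⁻¹) (Set.Icc (t - T) t) ∧
      ∫ s in Set.Icc (t - T) t, (Real.sqrt (θ s))⁻¹ = 2 * Real.sqrt T := by
    by_cases hw0 : w ≤ 0
    · simp only [θ, hw0, if_true]
      have := nln_left (t - T) t (by linarith)
      rwa [sub_sub_cancel] at this
    · simp only [θ, hw0, if_false]
      have := nln_right (t - T) t (by linarith)
      rwa [sub_sub_cancel] at this
  have hcI : IntegrableOn (fun _ : ℝ => (2:ℝ)) (Set.Icc (t - T) t) := by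
    simp
  have hgI : IntegrableOn (fun s => 2 + M * (Real.sqrt (θ s))⁻¹) (Set.Icc (t - T) t) :=
    hcI.add (hθint.1.const_mul M)
  have hgv : ∫ s in Set.Icc (t - T) t, (2 + M * (Real.sqrt (θ s))⁻¹) =
      2 * T + M * (2 * Real.sqrt T) := by
    rw [integral_add hcI (hθint.1.const_mul M), integral_const_mul, hθint.2]
    simp [hT.le, mul_comm]
  have hmain : (∫ s in Set.Icc (t - T) t, Real.exp (-ν ξ * (t - s) / 2) *
            ∫ ξ' : EuclideanSpace ℝ (Fin 3),
              Real.exp (-C * ‖ξ - ξ'‖ ^ 2) / ‖ξ - ξ'‖ *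
                (χ (alphaTilde u (1/8) ν₀ (x - (t - s) * w) ξ'))⁻¹) ≤
      ∫ s in Set.Icc (t - T) t, nlnK C ^ 3 / a * (2 + M * (Real.sqrt (θ s))⁻¹) := by
    apply integral_mono_of_nonneg
    · refine Filter.Eventually.of_forall fun s => ?_
      exact mul_nonneg (Real.exp_pos _).le (hin0 _)
    · exact hgI.const_mul _
    · have hne : ∀ r : ℝ, ∀ᵐ s : ℝ ∂(volume.restrict (Set.Icc (t - T) t)), s ≠ r := fun r =>
        ae_restrict_of_ae (by simp [ae_iff])
      filter_upwards [hne t, hne (t - T), ae_restrict_mem measurableSet_Icc] with s n1 n2 hs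
      have hθpos : 0 < θ s := by
        simp only [θ]
        split_ifs
        · exact sub_pos.2 (lt_of_le_of_ne hs.2 n1)
        · exact sub_pos.2 (lt_of_le_of_ne hs.1 n2.symm)
      have hy := nln_y_lower (τ := t - s) hx hT hT1 hxT (by linarith [hs.2]) (by linarith [hs.1])
      have hθe : (if w ≤ 0 then t - s else T - (t - s)) = θ s := by
        simp only [θ]
        split_ifs <;> ring
      rw [hθe] at hy
      have hypos : 0 < x - (t - s) * w := lt_of_lt_of_le (by positivity) hy
      have hI := nln_inner_le (u := u) hC hν₀ hχ0 hχinv _ hypos ξ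
      have hB := nln_time_bound hκ hapos ha1 haS hθpos hS hy
      have hexp : Real.exp (-ν ξ * (t - s) / 2) ≤ 1 := by
        apply Real.exp_le_one_iff.2
        nlinarith [mul_nonneg hν (sub_nonneg.2 hs.2)]
      calc _ ≤ 1 * _ := mul_le_mul_of_nonneg_right hexp (hin0 _)
        _ ≤ nlnK C ^ 3 * (2 + (Real.sqrt (κ * (x - (t - s) * w)))⁻¹) := by rw [one_mul]; exact hI
        _ ≤ nlnK C ^ 3 * ((2 + M * (Real.sqrt (θ s))⁻¹) / a) :=
          mul_le_mul_of_nonneg_left hB (by positivity)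
        _ = _ := by ring
  refine hmain.trans ?_
  rw [integral_const_mul, hgv, div_mul_eq_mul_div]
  apply div_le_div_of_nonneg_right _ hapos.le
  have hTs : T ≤ Real.sqrt T := Real.le_sqrt_of_sq_le (by nlinarith)
  have hK3 : 0 ≤ nlnK C ^ 3 := by positivity
  calc nlnK C ^ 3 * (2 * T + M * (2 * Real.sqrt T))
      ≤ nlnK C ^ 3 * ((2 + 2 * M) * Real.sqrt T) := by
        apply mul_le_mul_of_nonneg_left _ hK3
        linarith
    _ = nlnK C ^ 3 * (2 + 2 * M) * Real.sqrt T := by ring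
    _ ≤ (nlnK C ^ 3 * (2 + 2 * M) + 1) * (Real.sqrt T + T * Real.log t) := by
        apply mul_le_mul
        · linarith
        · have : 0 ≤ T * Real.log t := by positivity
          linarith
        · positivity
        · positivity
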